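/- arXiv:1905.12700 — 3 statements merged into one kernel-verified Lean document; each statement's English description precedes it below -/
import Mathlib

section
/- Let E ≥ 1 be an integer, let 0 ≤ k, l ≤ E, let η > 0 satisfy η·E ≤ 2, and let s be an integer with 1 ≤ s ≤ E − max(k,l). Then η^s · √(binom(s+k, k) · binom(s+l, l)) ≤ η · √((k+1)·(l+1)). -/
theorem aux_bound (E k : ℕ) (η : ℝ) (hη : 0 < η) (hηE : η * E ≤ 2) (t : ℕ) (h : t + 1 + k ≤ E) :
    η ^ t * ((t + 1 + k).choose k : ℝ) ≤ (k : ℝ) + 1 := by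
  induction t with
  | zero =>
    have : (0 + 1 + k).choose k = k + 1 := by
      rw [zero_add, Nat.add_comm 1 k]; exact Nat.choose_succ_self_right k
    rw [this]; simp
  | succ t ih =>
    have ih := ih (by omega)
    have h1 : (t + 1 + 1 + k).choose k * (t + 2) = (t + 2 + k) * (t + 1 + k).choose k := by
      have e := Nat.add_one_mul_choose_eq (t + 1 + k) (t + 1)
      have a1 : (t + 1 + k).choose k = (t + 1 + k).choose (t + 1) := Nat.choose_symm_add.symm
      have a2 : (t + 1 + 1 + k).choose k = (t + 1 + 1 + k).choose (t + 1 + 1) :=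
        Nat.choose_symm_add.symm
      rw [a1, a2]
      have a3 : t + 1 + 1 + k = t + 1 + k + 1 := by ring
      rw [a3]
      linarith
    have h2 : ((t + 1 + 1 + k).choose k : ℝ) * ((t : ℝ) + 2)
        = ((t : ℝ) + 2 + k) * ((t + 1 + k).choose k : ℝ) := by exact_mod_cast h1
    have h3 : η * ((t : ℝ) + 2 + k) ≤ 2 := by
      have : (t : ℝ) + 2 + k ≤ E := by exact_mod_cast (by omega : t + 2 + k ≤ E)
      nlinarith
    have ht : (0 : ℝ) ≤ t := Nat.cast_nonneg t
    have hA : 0 ≤ η ^ t * ((t + 1 + k).choose k : ℝ) := by positivity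
    have h4 : (η ^ (t + 1) * ((t + 1 + 1 + k).choose k : ℝ)) * ((t : ℝ) + 2)
        ≤ ((k : ℝ) + 1) * ((t : ℝ) + 2) := by
      calc (η ^ (t + 1) * ((t + 1 + 1 + k).choose k : ℝ)) * ((t : ℝ) + 2)
          = (η * ((t : ℝ) + 2 + k)) * (η ^ t * ((t + 1 + k).choose k : ℝ)) := by
            rw [mul_assoc, h2]; ring
        _ ≤ 2 * (η ^ t * ((t + 1 + k).choose k : ℝ)) := by gcongr
        _ ≤ ((t : ℝ) + 2) * ((k : ℝ) + 1) := by
            apply mul_le_mul _ ih hA <;> linarith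
        _ = _ := by ring
    exact le_of_mul_le_mul_right h4 (by positivity)

/-- `η^s·√(binom(s+k,k)·binom(s+l,l)) ≤ η·√((k+1)(l+1))` for
`1 ≤ s ≤ E − max(k,l)` and `η·E ≤ 2`. -/
theorem stmt5 (E k l s : ℕ) (hE : 1 ≤ E) (hk : k ≤ E) (hl : l ≤ E)
    (η : ℝ) (hη : 0 < η) (hηE : η * E ≤ 2)
    (hs1 : 1 ≤ s) (hs2 : s ≤ E - max k l) :
    η ^ s * Real.sqrt (((s + k).choose k * (s + l).choose l : ℕ)) ≤
      η * Real.sqrt (((k : ℝ) + 1) * ((l : ℝ) + 1)) := by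
  obtain ⟨t, rfl⟩ : ∃ t, s = t + 1 := ⟨s - 1, by omega⟩
  have hk' := aux_bound E k η hη hηE t (by omega)
  have hl' := aux_bound E l η hη hηE t (by omega)
  have key : η ^ t * Real.sqrt (((t + 1 + k).choose k * (t + 1 + l).choose l : ℕ)) ≤
      Real.sqrt (((k : ℝ) + 1) * ((l : ℝ) + 1)) := by
    apply Real.le_sqrt_of_sq_le
    rw [mul_pow, Real.sq_sqrt (Nat.cast_nonneg _), Nat.cast_mul]
    have := mul_le_mul hk' hl' (by positivity) (by positivity)
    linarith
  have := mul_le_mul_of_nonneg_left key hη.le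
  rw [pow_succ']
  linarith
end

section
/- For all integers n ≥ 1 and 0 ≤ r ≤ n, and every real p with 0 ≤ p ≤ 1: 2·binom(n,r)·p^{r+1}·(1−p)^{n−r} ≤ (√(r+1)/n)·exp((r+1)²/(n+1)). -/
open Real in
lemma aux_p (k m : ℕ) (hk : 1 ≤ k) (p : ℝ) (hp0 : 0 ≤ p) (hp1 : p ≤ 1) :
    p ^ k * (1 - p) ^ m ≤ ((k : ℝ) / (k + m)) ^ k * (exp (-k) * exp ((k : ℝ) ^ 2 / (k + m))) := by
  have hk' : (0 : ℝ) < k := by exact_mod_cast hk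
  have hm' : (0 : ℝ) ≤ m := Nat.cast_nonneg m
  have hN : (0 : ℝ) < k + m := by linarith
  have h1 : p ^ k ≤ ((k : ℝ) / (k + m)) ^ k * exp (p * (k + m) - k) := by
    have : p ≤ (k : ℝ) / (k + m) * exp (p * (k + m) / k - 1) := by
      have h := add_one_le_exp (p * (k + m) / k - 1)
      calc p = (k : ℝ) / (k + m) * (p * (k + m) / k - 1 + 1) := by field_simp; ring
        _ ≤ _ := mul_le_mul_of_nonneg_left h (by positivity)
    calc p ^ k ≤ _ := pow_le_pow_left₀ hp0 this k
      _ = _ := by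
        rw [mul_pow, ← exp_nat_mul]
        congr 2
        field_simp
  have h2 : (1 - p) ^ m ≤ exp (-(k * m / (k + m)) + (k - p * (k + m))) := by
    rcases Nat.eq_zero_or_pos m with h0 | h0
    · subst h0
      simp
      nlinarith
    · have hm : (0 : ℝ) < m := by exact_mod_cast h0
      have : 1 - p ≤ exp (-(k / (k + m)) + (k - p * (k + m)) / m) := by
        rw [exp_add]
        have ha := add_one_le_exp (-(k / (k + m)) : ℝ)
        have hb := add_one_le_exp ((k - p * (k + m)) / m : ℝ)
        have hc : (-(k / (k + m)) + 1 : ℝ) = m / (k + m) := by field_simp; ring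
        rw [hc] at ha
        calc 1 - p = m / (k + m) * ((k - p * (k + m)) / m + 1) := by field_simp; ring
          _ ≤ m / (k + m) * exp ((k - p * (k + m)) / m : ℝ) :=
            mul_le_mul_of_nonneg_left hb (by positivity)
          _ ≤ _ := mul_le_mul_of_nonneg_right ha (exp_pos _).le
      calc (1 - p) ^ m ≤ _ := pow_le_pow_left₀ (by linarith) this m
        _ = _ := by
          rw [← exp_nat_mul]
          congr 1
          field_simp
  calc p ^ k * (1 - p) ^ m ≤ _ := mul_le_mul h1 h2 (pow_nonneg (by linarith) _) (by positivity)
    _ = _ := by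
      rw [mul_assoc, ← exp_add, ← exp_add]
      congr 2
      field_simp
      ring

open Real in
lemma aux_stirling (k : ℕ) : 2 * √(k : ℝ) * ((k : ℝ) ^ k * exp (-k)) ≤ (k.factorial : ℝ) := by
  refine le_trans ?_ (Stirling.le_factorial_stirling k)
  have h : ((k : ℝ) / exp 1) ^ k = (k : ℝ) ^ k * exp (-k) := by
    rw [div_pow, ← exp_nat_mul, exp_neg, mul_one]; rfl
  rw [h]
  apply mul_le_mul_of_nonneg_right _ (by positivity)
  apply le_sqrt_of_sq_le
  rw [mul_pow, sq_sqrt (Nat.cast_nonneg k)]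
  nlinarith [pi_gt_three, (Nat.cast_nonneg k : (0 : ℝ) ≤ k)]

/-- `2·binom(n,r)·p^{r+1}·(1−p)^{n−r} ≤ (√(r+1)/n)·exp((r+1)²/(n+1))`. -/
theorem stmt15 (n r : ℕ) (hn : 1 ≤ n) (hr : r ≤ n) (p : ℝ) (hp0 : 0 ≤ p) (hp1 : p ≤ 1) :
    2 * (n.choose r : ℝ) * p ^ (r + 1) * (1 - p) ^ (n - r) ≤
      Real.sqrt ((r : ℝ) + 1) / (n : ℝ) * Real.exp (((r : ℝ) + 1) ^ 2 / ((n : ℝ) + 1)) := by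
  have hn' : (0 : ℝ) < n := by exact_mod_cast hn
  have h1 := aux_p (r + 1) (n - r) (by omega) p hp0 hp1
  have hN : (((r + 1 : ℕ) : ℝ) + ((n - r : ℕ) : ℝ)) = n + 1 := by
    push_cast [Nat.cast_sub hr]; ring
  rw [hN] at h1
  have h2 := aux_stirling (r + 1)
  have h3 : (n.choose r : ℝ) ≤ (n : ℝ) ^ r / (r.factorial : ℝ) := Nat.choose_le_pow_div r n
  rw [Nat.factorial_succ] at h2
  push_cast at h1 h2
  set k : ℝ := (r : ℝ) + 1 with hk
  have hkp : 0 < k := by positivity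
  have hf : (0 : ℝ) < r.factorial := by exact_mod_cast r.factorial_pos
  set E := Real.exp (k ^ 2 / (n + 1))
  have hE : 0 < E := Real.exp_pos _
  set F := Real.exp (-k)
  have hF : 0 < F := Real.exp_pos _
  have h4 : ((n : ℝ) / (n + 1)) ^ (r + 1) ≤ 1 :=
    pow_le_one₀ (by positivity) (by rw [div_le_one (by positivity)]; linarith)
  have hs : √k * √k = k := Real.mul_self_sqrt hkp.le
  have hs0 : 0 < √k := Real.sqrt_pos.2 hkp
  have h5 : 2 * (k ^ (r + 1) * F) ≤ √k * r.factorial := by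
    have : √k * (2 * (k ^ (r + 1) * F)) ≤ √k * (√k * r.factorial) := by
      rw [← mul_assoc √k √k, hs]; linarith
    exact le_of_mul_le_mul_left this hs0
  calc 2 * (n.choose r : ℝ) * p ^ (r + 1) * (1 - p) ^ (n - r)
      = 2 * (n.choose r : ℝ) * (p ^ (r + 1) * (1 - p) ^ (n - r)) := by ring
    _ ≤ 2 * ((n : ℝ) ^ r / (r.factorial : ℝ)) * ((k / (n + 1)) ^ (r + 1) * (F * E)) := by
        apply mul_le_mul _ h1 _ (by positivity)
        · linarith
        · exact mul_nonneg (pow_nonneg hp0 _) (pow_nonneg (by linarith) _)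
    _ = ((n : ℝ) / (n + 1)) ^ (r + 1) * ((2 * (k ^ (r + 1) * F)) / (r.factorial * n) * E) := by
        rw [div_pow, div_pow, pow_succ (n : ℝ) r]
        field_simp
    _ ≤ 1 * ((√k * r.factorial) / (r.factorial * n) * E) := by
        gcongr
    _ = √k / n * E := by
        field_simp
end

section
/- For all integers m ≥ 1, q ≥ 0 and n ≥ 8q + m: 1 − binom(n−8q, m)/binom(n−4q, m) ≤ m·(4q + m − 1)/(n − 4q). -/
/-- `1 − binom(n−8q,m)/binom(n−4q,m) ≤ m·(4q+m−1)/(n−4q)`. -/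
theorem stmt18 (m q n : ℕ) (hm : 1 ≤ m) (hq : 0 ≤ q) (hn : 8 * q + m ≤ n) :
    1 - ((n - 8 * q).choose m : ℝ) / ((n - 4 * q).choose m : ℝ) ≤
      (m : ℝ) * ((4 * q + m - 1 : ℕ) : ℝ) / ((n : ℝ) - 4 * q) := by
  obtain ⟨k, rfl⟩ := Nat.exists_eq_add_of_le hn
  have e1 : 8 * q + m + k - 8 * q = m + k := by omega
  have e2 : 8 * q + m + k - 4 * q = 4 * q + m + k := by omega
  have e3 : ((8 * q + m + k : ℕ) : ℝ) - 4 * q = ((4 * q + m + k : ℕ) : ℝ) := by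
    push_cast; ring
  rw [e1, e2, e3]
  set N := 4 * q + m + k with hN
  have hNpos : (0 : ℝ) < (N : ℝ) := by
    have : 0 < N := by omega
    exact_mod_cast this
  have hsub : ((4 * q + m - 1 : ℕ) : ℝ) = (N : ℝ) - ((k : ℝ) + 1) := by
    rw [Nat.cast_sub (by omega), hN]; push_cast; ring
  have h1 : ((k : ℝ) + 1) ^ m ≤ ((m + k).descFactorial m : ℝ) := by
    have h := Nat.pow_sub_le_descFactorial (m + k) m
    have e : m + k + 1 - m = k + 1 := by omega
    rw [e] at h
    exact_mod_cast h
  have h2 : (N.descFactorial m : ℝ) ≤ (N : ℝ) ^ m := by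
    exact_mod_cast Nat.descFactorial_le_pow N m
  have h3 : (0 : ℝ) < (N.descFactorial m : ℝ) := by
    have : 0 < N.descFactorial m := Nat.descFactorial_pos.2 (by omega)
    exact_mod_cast this
  have hf : (0 : ℝ) < (m.factorial : ℝ) := by exact_mod_cast m.factorial_pos
  have hr : ((m + k).choose m : ℝ) / (N.choose m : ℝ)
      = ((m + k).descFactorial m : ℝ) / (N.descFactorial m : ℝ) := by
    rw [Nat.descFactorial_eq_factorial_mul_choose, Nat.descFactorial_eq_factorial_mul_choose]
    push_cast
    rw [mul_div_mul_left _ _ hf.ne']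
  have h4 : (((k : ℝ) + 1) / N) ^ m
      ≤ ((m + k).descFactorial m : ℝ) / (N.descFactorial m : ℝ) := by
    rw [div_pow]
    exact div_le_div₀ (by positivity) h1 h3 h2
  have hx : (-2 : ℝ) ≤ ((k : ℝ) + 1) / N - 1 := by
    have : (0 : ℝ) ≤ ((k : ℝ) + 1) / N := by positivity
    linarith
  have h5 := one_add_mul_le_pow hx m
  have e5 : 1 + (((k : ℝ) + 1) / N - 1) = ((k : ℝ) + 1) / N := by ring
  rw [e5] at h5
  have e6 : (m : ℝ) * ((N : ℝ) - ((k : ℝ) + 1)) / N = - (m * (((k : ℝ) + 1) / N - 1)) := by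
    field_simp; ring
  rw [hr, hsub, e6]
  linarith
end
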